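/- arXiv:2605.20552 — 2 statements merged into one kernel-verified Lean document; each statement's English description precedes it below -/
import Mathlib

section
/- Let Λ be a diagonal N×N matrix with entries 0 < λ = λ_1 ≤ λ_2 ≤ … ≤ λ_N, let x_1, …, x_T ∈ ℝ^N satisfy ‖x_t‖_2 ≤ 1 for all t, and set V_T = Λ + Σ_{t=1}^T x_t x_t^T. Let d be the effective dimension, i.e., the largest d such that (d − 1) λ_d ≤ T / log(1 + T/λ). Then log(det(V_T) / det(Λ)) ≤ 2 d log(1 + T/λ). -/
open Matrix Finset

/-- The defining set of the effective dimension: the set of `d ∈ {1, …, N}`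
such that `(d - 1) λ_d ≤ T / log (1 + T / λ₁)`, where `ev d` is the `d`-th
(1-indexed) diagonal entry of `Λ`. -/
def effDimSet (N : ℕ) (ev : ℕ → ℝ) (T : ℝ) : Set ℕ :=
  {d : ℕ | 1 ≤ d ∧ d ≤ N ∧ ((d : ℝ) - 1) * ev d ≤ T / Real.log (1 + T / ev 1)}

theorem hadamard_aux {n : ℕ} (A : Matrix (Fin n) (Fin n) ℝ) (hA : A.PosDef) :
    A.det ≤ ∏ i, A i i := by
  have hpos : ∀ i, 0 < A i i := fun i => hA.diag_pos
  set c : Fin n → ℝ := fun i => (Real.sqrt (A i i))⁻¹ with hc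
  have hcc : ∀ i, c i * c i * A i i = 1 := by
    intro i
    have h1 : Real.sqrt (A i i) * Real.sqrt (A i i) = A i i := Real.mul_self_sqrt (hpos i).le
    have h2 : Real.sqrt (A i i) ≠ 0 := (Real.sqrt_pos.2 (hpos i)).ne'
    simp only [hc]
    rw [← mul_inv, h1]
    exact inv_mul_cancel₀ (hpos i).ne'
  set B : Matrix (Fin n) (Fin n) ℝ := diagonal c * A * (diagonal c)ᴴ with hB
  have hBp : B.PosSemidef := hA.posSemidef.mul_mul_conjTranspose_same _
  have hBdiag : ∀ i, B i i = 1 := by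
    intro i
    rw [← hcc i, hB, diagonal_conjTranspose, mul_diagonal, diagonal_mul]
    simp
    ring
  have htr : ∑ i, hBp.1.eigenvalues i = n := by
    have := hBp.1.trace_eq_sum_eigenvalues
    simp only [trace, Matrix.diag, hBdiag] at this
    simpa using this.symm
  have hdet : B.det ≤ 1 := by
    rw [hBp.1.det_eq_prod_eigenvalues]
    calc ∏ i, (hBp.1.eigenvalues i : ℝ) ≤ ∏ i, Real.exp (hBp.1.eigenvalues i - 1) := by
          apply Finset.prod_le_prod
          · intro i _
            exact hBp.eigenvalues_nonneg i
          · intro i _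
            have := Real.add_one_le_exp (hBp.1.eigenvalues i - 1)
            linarith
      _ = 1 := by
          rw [← Real.exp_sum, Finset.sum_sub_distrib, htr]
          simp
  have hdet2 : B.det = (∏ i, c i * c i) * A.det := by
    rw [hB, det_mul, det_mul, diagonal_conjTranspose, det_diagonal, det_diagonal,
      Finset.prod_mul_distrib]
    simp
    ring
  have h1 : (∏ i, c i * c i) * ∏ i, A i i = 1 := by
    rw [← Finset.prod_mul_distrib]
    simp [hcc]
  have hP : 0 < ∏ i, A i i := Finset.prod_pos fun i _ => hpos i
  calc A.det = B.det * ∏ i, A i i := by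
        rw [hdet2]; linear_combination (-A.det) * h1
    _ ≤ 1 * ∏ i, A i i := by gcongr
    _ = _ := one_mul _

/-- **Determinant bound via the effective dimension.**
Let `Λ` be diagonal with entries `0 < λ = λ_1 ≤ … ≤ λ_N`, let `x_1, …, x_T`
have Euclidean norm at most `1`, and let `V_T = Λ + ∑ t, x_t x_tᵀ`.  If `d` is
the effective dimension (the largest `d` with
`(d-1) λ_d ≤ T / log(1 + T/λ)`), then
`log (det V_T / det Λ) ≤ 2 d log (1 + T/λ)`. -/
theorem log_det_ratio_le_effective_dimension
    (N T : ℕ) (hN : 1 ≤ N)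
    (ev : ℕ → ℝ)
    (hev_pos : 0 < ev 1)
    (hev_mono : MonotoneOn ev (Set.Icc 1 N))
    (x : Fin T → Fin N → ℝ)
    (hx : ∀ t, ∑ i, (x t i) ^ 2 ≤ 1)
    (Λ V : Matrix (Fin N) (Fin N) ℝ)
    (hΛ : Λ = Matrix.diagonal fun i : Fin N => ev ((i : ℕ) + 1))
    (hV : V = Λ + ∑ t, Matrix.vecMulVec (x t) (x t))
    (d : ℕ)
    (hd : IsGreatest (effDimSet N ev (T : ℝ)) d) :
    Real.log (V.det / Λ.det) ≤ 2 * d * Real.log (1 + (T : ℝ) / ev 1) := by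
  obtain ⟨⟨hd1, hdN, -⟩, hmax⟩ := hd
  have hle : ∀ i j : ℕ, 1 ≤ i → i ≤ j → j ≤ N → ev i ≤ ev j := fun i j h1 h2 h3 =>
    hev_mono ⟨h1, h2.trans h3⟩ ⟨h1.trans h2, h3⟩ h2
  have hpos : ∀ i : Fin N, 0 < ev ((i : ℕ) + 1) := fun i =>
    hev_pos.trans_le (hle 1 _ le_rfl (by omega) (by omega))
  have hT0 : (0 : ℝ) ≤ T := Nat.cast_nonneg T
  set L := Real.log (1 + (T : ℝ) / ev 1) with hL
  have hL0 : 0 ≤ L := Real.log_nonneg (by have := div_nonneg hT0 hev_pos.le; linarith)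
  set s : Fin N → ℝ := fun i => ∑ t, (x t i) ^ 2 with hs
  have hs0 : ∀ i, 0 ≤ s i := fun i => Finset.sum_nonneg fun t _ => sq_nonneg _
  have hsum : ∑ i, s i ≤ T := by
    simp only [hs]
    rw [Finset.sum_comm]
    calc _ ≤ ∑ t : Fin T, (1 : ℝ) := Finset.sum_le_sum fun t _ => hx t
      _ = T := by simp
  have hsT : ∀ i, s i ≤ T := fun i =>
    (Finset.single_le_sum (fun j _ => hs0 j) (Finset.mem_univ i)).trans hsum
  have hΛp : Λ.PosDef := by
    rw [hΛ]; exact PosDef.diagonal hpos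
  have hVp : V.PosDef := by
    rw [hV]
    refine hΛp.add_posSemidef (posSemidef_sum _ fun t _ => ?_)
    simpa using posSemidef_vecMulVec_self_star (x t)
  have hVd : ∀ i, V i i = ev ((i : ℕ) + 1) + s i := by
    intro i
    rw [hV, hΛ]
    simp [hs, Matrix.sum_apply, vecMulVec_apply, pow_two]
  have hΛd : Λ.det = ∏ i : Fin N, ev ((i : ℕ) + 1) := by rw [hΛ, det_diagonal]
  have hratio : V.det / Λ.det ≤ ∏ i : Fin N, (1 + s i / ev ((i : ℕ) + 1)) := by
    rw [div_le_iff₀ hΛp.det_pos, hΛd, ← Finset.prod_mul_distrib]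
    refine (hadamard_aux V hVp).trans (le_of_eq (Finset.prod_congr rfl fun i _ => ?_))
    rw [hVd]
    have := (hpos i).ne'
    field_simp
  have hfac : ∀ i : Fin N, 0 < 1 + s i / ev ((i : ℕ) + 1) := fun i => by
    have := div_nonneg (hs0 i) (hpos i).le
    linarith
  obtain ⟨c, hc0, hcT, hci⟩ : ∃ c : ℝ, 0 ≤ c ∧ c * T ≤ d * L ∧
      ∀ i : Fin N, d ≤ (i : ℕ) → (ev ((i : ℕ) + 1))⁻¹ ≤ c := by
    rcases hdN.eq_or_lt with h | h
    · refine ⟨0, le_rfl, ?_, fun i hi => absurd i.2 (by omega)⟩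
      rw [zero_mul]; positivity
    · have hp : 0 < ev (d + 1) := hpos ⟨d, h⟩
      refine ⟨(ev (d + 1))⁻¹, by positivity, ?_, fun i hi => ?_⟩
      · have hn : ¬ (d + 1 ∈ effDimSet N ev (T : ℝ)) := fun hm => by
          have := hmax hm
          omega
        simp only [effDimSet, Set.mem_setOf_eq, not_and, not_le] at hn
        have hn' := hn (by omega) (by omega)
        rw [← hL] at hn'
        push_cast at hn'
        rcases Nat.eq_zero_or_pos T with hT | hT
        · rw [hT]; simp only [Nat.cast_zero, mul_zero]; positivity
        · have hTp : (0 : ℝ) < T := Nat.cast_pos.2 hT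
          have hLp : 0 < L := Real.log_pos (by have := div_pos hTp hev_pos; linarith)
          rw [div_lt_iff₀ hLp] at hn'
          rw [inv_mul_le_iff₀ hp]
          nlinarith
      · exact inv_anti₀ hp (hle _ _ (by omega) (by omega) (by omega))
  have hterm : ∀ i : Fin N, Real.log (1 + s i / ev ((i : ℕ) + 1)) ≤
      (if (i : ℕ) < d then L else 0) + s i * c := by
    intro i
    have hsc := mul_nonneg (hs0 i) hc0
    split_ifs with h
    · have : Real.log (1 + s i / ev ((i : ℕ) + 1)) ≤ L := by
        apply Real.log_le_log (hfac i)
        have := div_le_div₀ hT0 (hsT i) hev_pos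
          (hle 1 ((i : ℕ) + 1) le_rfl (by omega) (by omega))
        linarith
      linarith
    · have h1 := Real.log_le_sub_one_of_pos (hfac i)
      have h2 := mul_le_mul_of_nonneg_left (hci i (by omega)) (hs0 i)
      rw [← div_eq_mul_inv] at h2
      linarith
  have hcount : ∑ i : Fin N, (if (i : ℕ) < d then L else 0) = d * L := by
    rw [Fin.sum_univ_eq_sum_range (fun i => if i < d then L else 0) N, ← Finset.sum_filter,
      Finset.sum_const, nsmul_eq_mul]
    have : (Finset.range N).filter (fun i => i < d) = Finset.range d := by
      ext i; simp only [Finset.mem_filter, Finset.mem_range]; omega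
    rw [this, Finset.card_range]
  calc Real.log (V.det / Λ.det)
      ≤ Real.log (∏ i : Fin N, (1 + s i / ev ((i : ℕ) + 1))) :=
        Real.log_le_log (div_pos hVp.det_pos hΛp.det_pos) hratio
    _ = ∑ i : Fin N, Real.log (1 + s i / ev ((i : ℕ) + 1)) :=
        Real.log_prod fun i _ => (hfac i).ne'
    _ ≤ ∑ i : Fin N, ((if (i : ℕ) < d then L else 0) + s i * c) :=
        Finset.sum_le_sum fun i _ => hterm i
    _ = d * L + (∑ i, s i) * c := by
        rw [Finset.sum_add_distrib, hcount, Finset.sum_mul]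
    _ ≤ d * L + T * c := by gcongr
    _ ≤ 2 * d * L := by linarith
end

section
/- Let Λ be a symmetric positive definite N×N matrix, let x_1, …, x_T ∈ ℝ^N, and define V_0 = Λ and V_t = V_{t−1} + x_t x_t^T for t = 1, …, T. Then Σ_{t=1}^T min(1, x_t^T V_{t−1}^{−1} x_t) ≤ 2 log(det(V_T) / det(Λ)). -/
open Matrix Finset

/-- The regularized design matrix after `t` rounds:
`V_t = Λ + ∑_{τ < t} x_τ x_τᵀ` (so `V_0 = Λ` and `V_t = V_{t-1} + x_t x_tᵀ`,
with the rounds `0`-indexed by `Fin T`). -/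
def designMatrix (N T : ℕ) (Λ : Matrix (Fin N) (Fin N) ℝ)
    (x : Fin T → Fin N → ℝ) (t : ℕ) : Matrix (Fin N) (Fin N) ℝ :=
  Λ + ∑ τ ∈ Finset.univ.filter (fun τ : Fin T => (τ : ℕ) < t),
        Matrix.vecMulVec (x τ) (x τ)

lemma ep_min_le (y : ℝ) (hy : 0 ≤ y) : min 1 y ≤ 2 * Real.log (1 + y) := by
  have h := Real.one_sub_inv_le_log_of_pos (x := 1 + y) (by linarith)
  have h2 : min 1 y ≤ 2 * (1 - (1 + y)⁻¹) := by
    have e : 2 * (1 - (1 + y)⁻¹) = 2 * y / (1 + y) := by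
      have : (1 + y) ≠ 0 := by linarith
      field_simp
      ring
    rw [e, le_div_iff₀ (by linarith)]
    rcases le_total 1 y with h1 | h1
    · rw [min_eq_left h1]; linarith
    · rw [min_eq_right h1]; nlinarith
  linarith

lemma ep_posDef (N T : ℕ) (Λ : Matrix (Fin N) (Fin N) ℝ) (hΛ : Λ.PosDef)
    (x : Fin T → Fin N → ℝ) (t : ℕ) : (designMatrix N T Λ x t).PosDef := by
  refine hΛ.add_posSemidef (posSemidef_sum _ fun i _ => ?_)
  simpa using posSemidef_vecMulVec_self_star (x i)

lemma ep_succ (N T : ℕ) (Λ : Matrix (Fin N) (Fin N) ℝ)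
    (x : Fin T → Fin N → ℝ) (t : Fin T) :
    designMatrix N T Λ x ((t : ℕ) + 1) =
      designMatrix N T Λ x t + vecMulVec (x t) (x t) := by
  have : Finset.univ.filter (fun τ : Fin T => (τ : ℕ) < (t : ℕ) + 1) =
      insert t (Finset.univ.filter (fun τ : Fin T => (τ : ℕ) < (t : ℕ))) := by
    ext a
    simp [Fin.ext_iff]
    omega
  unfold designMatrix
  rw [this, Finset.sum_insert (by simp)]
  abel

lemma ep_det (N : ℕ) (A : Matrix (Fin N) (Fin N) ℝ) (hA : A.PosDef) (v : Fin N → ℝ) :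
    (A + vecMulVec v v).det = A.det * (1 + v ⬝ᵥ A⁻¹ *ᵥ v) := by
  rw [vecMulVec_eq Unit, det_add_replicateCol_mul_replicateRow hA.det_pos.ne'.isUnit,
    det_unique (n := Unit), Matrix.mul_assoc, ← replicateCol_mulVec]
  simp

/-- **Elliptical potential inequality.**
For a symmetric positive definite `Λ` and any `x_1, …, x_T ∈ ℝ^N`, with
`V_0 = Λ` and `V_t = V_{t-1} + x_t x_tᵀ`, one has
`∑_{t=1}^T min(1, x_tᵀ V_{t-1}⁻¹ x_t) ≤ 2 log (det V_T / det Λ)`. -/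
theorem elliptical_potential_inequality
    (N T : ℕ)
    (Λ : Matrix (Fin N) (Fin N) ℝ)
    (hΛ : Λ.PosDef)
    (x : Fin T → Fin N → ℝ) :
    ∑ t : Fin T,
        min 1 (x t ⬝ᵥ (designMatrix N T Λ x (t : ℕ))⁻¹ *ᵥ x t)
      ≤ 2 * Real.log ((designMatrix N T Λ x T).det / Λ.det) := by
  have hstep : ∀ t : Fin T, min 1 (x t ⬝ᵥ (designMatrix N T Λ x (t : ℕ))⁻¹ *ᵥ x t) ≤
      (fun k : ℕ => 2 * Real.log (designMatrix N T Λ x (k + 1)).det -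
        2 * Real.log (designMatrix N T Λ x k).det) (t : ℕ) := by
    intro t
    have hV := ep_posDef N T Λ hΛ x t
    have hy : 0 ≤ x t ⬝ᵥ (designMatrix N T Λ x (t : ℕ))⁻¹ *ᵥ x t := by
      simpa using hV.inv.posSemidef.dotProduct_mulVec_nonneg (x t)
    have h := ep_min_le _ hy
    have hne : 1 + x t ⬝ᵥ (designMatrix N T Λ x (t : ℕ))⁻¹ *ᵥ x t ≠ 0 := by linarith
    simp only
    rw [ep_succ, ep_det N _ hV, Real.log_mul hV.det_pos.ne' hne]
    linarith
  have h0 : designMatrix N T Λ x 0 = Λ := by simp [designMatrix]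
  refine (Finset.sum_le_sum fun t _ => hstep t).trans ?_
  rw [Fin.sum_univ_eq_sum_range (fun k : ℕ => 2 * Real.log (designMatrix N T Λ x (k + 1)).det -
        2 * Real.log (designMatrix N T Λ x k).det) T,
    Finset.sum_range_sub (fun k : ℕ => 2 * Real.log (designMatrix N T Λ x k).det), h0,
    Real.log_div (ep_posDef N T Λ hΛ x T).det_pos.ne' hΛ.det_pos.ne']
  linarith
end
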